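/- Let Δ ≥ 2 be an integer and let 𝒢 be the family of all claw-free graphs (graphs with no induced K_{1,3}) of maximum degree at most Δ. Then for every λ > 0 and every δ with 0 < δ < 1/(eΔ) there exists a constant C > 0 such that the hard-core measure at λ satisfies strong spatial mixing on 𝒢 with exponential rate r = 1 + √(δ/λ) and constant C. -/

import Mathlib

open Finset

noncomputable section

namespace HardCore

open scoped Classical

variable {V : Type*}

/-- `s` is an independent set in the graph `G`. -/
def IsInd (G : SimpleGraph V) (s : Finset V) : Prop :=
  ∀ u ∈ s, ∀ w ∈ s, ¬ G.Adj u w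

/-- The independence polynomial of the subgraph of `G` induced on the vertex set `A`,
evaluated at `lam`:  `Z_{G[A]}(lam) = ∑_{I ⊆ A independent} lam^{|I|}`. -/
def Z (R : Type*) [Field R] [Fintype V] (G : SimpleGraph V) (A : Finset V) (lam : R) : R :=
  ∑ s ∈ A.powerset, if IsInd G s then lam ^ s.card else 0

/-- The closed neighbourhood `N[v]` of a vertex `v` as a `Finset`. -/
def closedNbhd [Fintype V] (G : SimpleGraph V) (v : V) : Finset V :=
  univ.filter fun u => u = v ∨ G.Adj v u

/-- The ratio `P_{G[A],v}(lam) = lam * Z_{G[A] ∖ N[v]}(lam) / Z_{G[A]}(lam)` for the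
subgraph of `G` induced on `A`. -/
def ratio {R : Type*} [Field R] [Fintype V] (G : SimpleGraph V) (A : Finset V) (v : V)
    (lam : R) : R :=
  lam * Z R G (A \ closedNbhd G v) lam / Z R G A lam

/-- `σ` is a valid boundary condition on `Λ`: the set of vertices of `Λ` set to `1`
is independent in the subgraph of `G` induced by `Λ`. -/
def IsBC (G : SimpleGraph V) (Λ : Finset V) (σ : V → Bool) : Prop :=
  ∀ u ∈ Λ, ∀ w ∈ Λ, σ u = true → σ w = true → ¬ G.Adj u w

/-- An independent set `s` is compatible with the boundary condition `σ` on `Λ`: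
`σ⁻¹(1) ⊆ s` and `σ⁻¹(0) ∩ s = ∅`. -/
def Compat (Λ : Finset V) (σ : V → Bool) (s : Finset V) : Prop :=
  ∀ u ∈ Λ, (u ∈ s ↔ σ u = true)

/-- The conditional probability `Pr_μ[v ∈ I ∣ σ]` that `v` belongs to the random
independent set drawn from the hard-core measure at `lam`, conditioned on the
boundary condition `σ` on `Λ`. -/
def condProb [Fintype V] (G : SimpleGraph V) (lam : ℝ) (Λ : Finset V) (σ : V → Bool)
    (v : V) : ℝ :=
  (∑ s : Finset V, if IsInd G s ∧ Compat Λ σ s ∧ v ∈ s then lam ^ s.card else 0) /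
  (∑ s : Finset V, if IsInd G s ∧ Compat Λ σ s then lam ^ s.card else 0)

/-- The hard-core measure on `G` at activity `lam` satisfies the strong spatial mixing
bound with constant `C` and exponential rate `r`:  for every vertex `v`, every
`Λ ⊆ V ∖ {v}` and any two boundary conditions `σ, τ` on `Λ`,
`|Pr[v ∈ I ∣ σ] − Pr[v ∈ I ∣ τ]| ≤ C ⬝ r^{−d_G(v, σ ≠ τ)}`.
(The distance `d_G(v, σ ≠ τ)` is encoded by quantifying over all `d : ℕ` that are a
lower bound, in `ℕ∞`, for the distance from `v` to every vertex at which `σ, τ` differ.) -/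
def SSM [Fintype V] (G : SimpleGraph V) (lam : ℝ) (C r : ℝ) : Prop :=
  ∀ (v : V) (Λ : Finset V), v ∉ Λ → ∀ σ τ : V → Bool, IsBC G Λ σ → IsBC G Λ τ →
    ∀ d : ℕ, (∀ u ∈ Λ, σ u ≠ τ u → (d : ℕ∞) ≤ G.edist v u) →
      |condProb G lam Λ σ v - condProb G lam Λ τ v| ≤ C * r ^ (-(d : ℤ))

/-- `G` has maximum degree at most `Δ`. -/
def MaxDegLE [Fintype V] (G : SimpleGraph V) (Δ : ℕ) : Prop :=
  ∀ v : V, (univ.filter fun u => G.Adj v u).card ≤ Δ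

/-- The vertex set of the graph `G[σ]`, i.e. the vertices of `V ∖ Λ` that are not
adjacent to any vertex of `Λ` that is set to `1` by `σ`. -/
def goodSet [Fintype V] (G : SimpleGraph V) (Λ : Finset V) (σ : V → Bool) : Finset V :=
  (univ \ Λ).filter fun u => ∀ w ∈ Λ, σ w = true → ¬ G.Adj w u

end HardCore

namespace HardCore

/-- `G` is claw-free: it contains no induced `K_{1,3}`. -/
def ClawFree {V : Type*} (G : SimpleGraph V) : Prop :=
  ∀ v a b c : V, G.Adj v a → G.Adj v b → G.Adj v c → a ≠ b → a ≠ c → b ≠ c →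
    G.Adj a b ∨ G.Adj a c ∨ G.Adj b c

section Aux

open scoped Classical

/-- The neighbours of `a`. -/
def nbr {V : Type} [Fintype V] (G : SimpleGraph V) (a : V) : Finset V :=
  univ.filter fun u => G.Adj a u

/-- The neighbours of the set `S`. -/
def nbs {V : Type} [Fintype V] (G : SimpleGraph V) (S : Finset V) : Finset V :=
  univ.filter fun u => ∃ w ∈ S, G.Adj w u

theorem mem_nbr {V : Type} [Fintype V] {G : SimpleGraph V} {a u : V} :
    u ∈ nbr G a ↔ G.Adj a u := by simp [nbr]

theorem mem_nbs {V : Type} [Fintype V] {G : SimpleGraph V} {S : Finset V} {u : V} :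
    u ∈ nbs G S ↔ ∃ w ∈ S, G.Adj w u := by simp [nbs]

theorem mem_closedNbhd {V : Type} [Fintype V] {G : SimpleGraph V} {a u : V} :
    u ∈ closedNbhd G a ↔ u = a ∨ G.Adj a u := by simp [closedNbhd]

/-- weight of a set -/
def wt {V : Type} (G : SimpleGraph V) (x : ℝ) (s : Finset V) : ℝ :=
  if IsInd G s then x ^ s.card else 0

theorem wt_nonneg {V : Type} (G : SimpleGraph V) {x : ℝ} (hx : 0 < x) (s : Finset V) :
    0 ≤ wt G x s := by
  unfold wt; split_ifs <;> positivity

theorem fiber {V : Type} [Fintype V] (G : SimpleGraph V) (x : ℝ) (A N S : Finset V)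
    (hNA : N ⊆ A) (hSN : S ⊆ N) :
    ∑ s ∈ A.powerset with s ∩ N = S, wt G x s
      = wt G x S * Z ℝ G ((A \ N) \ nbs G S) x := by
  by_cases hS : IsInd G S
  · have h1 : wt G x S = x ^ S.card := by simp [wt, hS]
    rw [h1, Z, Finset.mul_sum]
    unfold wt
    simp only [mul_ite, mul_zero]
    rw [← Finset.sum_filter, ← Finset.sum_filter]
    refine Finset.sum_bij' (fun s _ => s \ N) (fun t _ => S ∪ t) ?_ ?_ ?_ ?_ ?_
    · intro s hs
      simp only [Finset.mem_filter, Finset.mem_powerset] at hs ⊢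
      obtain ⟨⟨hsA, hsN⟩, hi⟩ := hs
      refine ⟨?_, ?_⟩
      · intro u hu
        rw [Finset.mem_sdiff] at hu
        simp only [Finset.mem_sdiff, mem_nbs, not_exists, not_and]
        refine ⟨⟨hsA hu.1, hu.2⟩, ?_⟩
        intro w hw
        rw [← hsN] at hw
        exact hi w (Finset.mem_inter.1 hw).1 u hu.1
      · intro u hu w hw
        exact hi u (Finset.mem_sdiff.1 hu).1 w (Finset.mem_sdiff.1 hw).1
    · intro t ht
      simp only [Finset.mem_filter, Finset.mem_powerset] at ht ⊢
      obtain ⟨htA, hi⟩ := ht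
      have key : ∀ u ∈ t, (u ∈ A ∧ u ∉ N) ∧ ∀ w ∈ S, ¬ G.Adj w u := by
        intro u hu
        have := htA hu
        simpa [Finset.mem_sdiff, mem_nbs] using this
      refine ⟨⟨?_, ?_⟩, ?_⟩
      · exact Finset.union_subset (hSN.trans hNA) fun u hu => (key u hu).1.1
      · ext u
        simp only [Finset.mem_inter, Finset.mem_union]
        constructor
        · rintro ⟨h | h, h2⟩
          · exact h
          · exact absurd h2 (key u h).1.2
        · intro h
          exact ⟨Or.inl h, hSN h⟩
      · intro u hu w hw
        rcases Finset.mem_union.1 hu with hu | hu <;> rcases Finset.mem_union.1 hw with hw | hw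
        · exact hS u hu w hw
        · exact (key w hw).2 u hu
        · exact fun h => (key u hu).2 w hw h.symm
        · exact hi u hu w hw
    · intro s hs
      simp only [Finset.mem_filter, Finset.mem_powerset] at hs ⊢
      obtain ⟨⟨hsA, hsN⟩, hi⟩ := hs
      rw [← hsN]
      ext u
      simp only [Finset.mem_union, Finset.mem_inter, Finset.mem_sdiff]
      tauto
    · intro t ht
      simp only [Finset.mem_filter, Finset.mem_powerset] at ht ⊢
      obtain ⟨htA, hi⟩ := ht
      ext u
      simp only [Finset.mem_union, Finset.mem_sdiff]
      constructor
      · rintro ⟨h | h, h2⟩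
        · exact absurd (hSN h) h2
        · exact h
      · intro h
        have := htA h
        simp only [Finset.mem_sdiff] at this
        exact ⟨Or.inr h, this.1.2⟩
    · intro s hs
      simp only [Finset.mem_filter, Finset.mem_powerset] at hs ⊢
      obtain ⟨⟨hsA, hsN⟩, hi⟩ := hs
      rw [← pow_add, ← hsN, Finset.card_inter_add_card_sdiff]
  · have h1 : wt G x S = 0 := by simp [wt, hS]
    rw [h1, zero_mul]
    refine Finset.sum_eq_zero ?_
    intro s hs
    simp only [Finset.mem_filter, Finset.mem_powerset] at hs
    unfold wt
    rw [if_neg]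
    intro hi
    apply hS
    intro u hu w hw
    rw [← hs.2] at hu hw
    exact hi u (Finset.mem_inter.1 hu).1 w (Finset.mem_inter.1 hw).1

theorem Z_expand {V : Type} [Fintype V] (G : SimpleGraph V) (x : ℝ) (A N : Finset V)
    (hNA : N ⊆ A) :
    Z ℝ G A x = ∑ S ∈ N.powerset, wt G x S * Z ℝ G ((A \ N) \ nbs G S) x := by
  have h : ∀ s ∈ A.powerset, s ∩ N ∈ N.powerset := fun s _ =>
    Finset.mem_powerset.2 Finset.inter_subset_right
  have := Finset.sum_fiberwise_of_maps_to h (fun s => wt G x s)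
  have h2 : Z ℝ G A x = ∑ s ∈ A.powerset, wt G x s := rfl
  rw [h2, ← this]
  exact Finset.sum_congr rfl fun S hS => fiber G x A N S hNA (Finset.mem_powerset.1 hS)

theorem wt_empty {V : Type} (G : SimpleGraph V) (x : ℝ) : wt G x ∅ = 1 := by
  simp [wt, IsInd]

theorem wt_singleton {V : Type} (G : SimpleGraph V) (x : ℝ) (u : V) : wt G x {u} = x := by
  simp [wt, IsInd]

theorem Z_pos {V : Type} [Fintype V] (G : SimpleGraph V) {x : ℝ} (hx : 0 < x) (A : Finset V) :
    0 < Z ℝ G A x := by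
  have h2 : Z ℝ G A x = ∑ s ∈ A.powerset, wt G x s := rfl
  rw [h2]
  refine Finset.sum_pos' (fun s _ => wt_nonneg G hx s) ⟨∅, by simp, ?_⟩
  rw [wt_empty]; exact one_pos

/-- `K` is a clique. -/
def Clq {V : Type} (G : SimpleGraph V) (K : Finset V) : Prop :=
  ∀ u ∈ K, ∀ w ∈ K, u ≠ w → G.Adj u w

theorem nbs_empty {V : Type} [Fintype V] (G : SimpleGraph V) : nbs G ∅ = ∅ := by
  simp [nbs]

theorem nbs_singleton {V : Type} [Fintype V] (G : SimpleGraph V) (u : V) :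
    nbs G {u} = nbr G u := by
  ext; simp [mem_nbs, mem_nbr]

theorem Z_clique {V : Type} [Fintype V] (G : SimpleGraph V) (x : ℝ) (W K : Finset V)
    (hKW : K ⊆ W) (hK : Clq G K) :
    Z ℝ G W x = Z ℝ G (W \ K) x + x * ∑ u ∈ K, Z ℝ G ((W \ K) \ nbr G u) x := by
  rw [Z_expand G x W K hKW]
  have hsub : insert ∅ (K.image fun u => ({u} : Finset V)) ⊆ K.powerset := by
    intro S hS
    simp only [Finset.mem_insert, Finset.mem_image] at hS
    rcases hS with rfl | ⟨u, hu, rfl⟩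
    · simp
    · simpa using hu
  rw [← Finset.sum_subset hsub, Finset.sum_insert, Finset.sum_image]
  · simp [wt_empty, wt_singleton, nbs_empty, nbs_singleton, Finset.mul_sum]
  · intro a _ b _ h
    simpa using h
  · simp
  · intro S hS hS2
    have hnot : ¬ IsInd G S := by
      intro hi
      apply hS2
      rw [Finset.mem_insert, Finset.mem_image]
      by_cases hS0 : S = ∅
      · exact Or.inl hS0
      · right
        obtain ⟨u, hu⟩ := Finset.nonempty_iff_ne_empty.2 hS0
        refine ⟨u, Finset.mem_powerset.1 hS hu, ?_⟩
        ext w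
        rw [Finset.mem_singleton]
        constructor
        · rintro rfl; exact hu
        · intro hw
          by_contra hne
          exact hi w hw u hu (hK w (Finset.mem_powerset.1 hS hw) u
            (Finset.mem_powerset.1 hS hu) hne)
    simp [wt, hnot]

/-- The ratio `Z(W \ K) / Z(W)`. -/
def RR {V : Type} [Fintype V] (G : SimpleGraph V) (x : ℝ) (W K : Finset V) : ℝ :=
  Z ℝ G (W \ K) x / Z ℝ G W x

theorem RR_pos {V : Type} [Fintype V] (G : SimpleGraph V) {x : ℝ} (hx : 0 < x)
    (W K : Finset V) : 0 < RR G x W K := div_pos (Z_pos G hx _) (Z_pos G hx _)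

theorem RR_rec {V : Type} [Fintype V] (G : SimpleGraph V) {x : ℝ} (hx : 0 < x)
    (W K : Finset V) (hKW : K ⊆ W) (hK : Clq G K) :
    RR G x W K = 1 / (1 + x * ∑ u ∈ K, RR G x (W \ K) ((W \ K) ∩ nbr G u)) := by
  unfold RR
  have h1 : ∀ u, (W \ K) \ ((W \ K) ∩ nbr G u) = (W \ K) \ nbr G u := fun u =>
    Finset.sdiff_inter_self_left _ _
  simp only [h1]
  rw [← Finset.sum_div, Z_clique G x W K hKW hK]
  have := Z_pos G hx (W \ K)
  field_simp

theorem RR_le_one {V : Type} [Fintype V] (G : SimpleGraph V) {x : ℝ} (hx : 0 < x)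
    (W K : Finset V) (hKW : K ⊆ W) (hK : Clq G K) : RR G x W K ≤ 1 := by
  rw [RR_rec G hx W K hKW hK]
  rw [div_le_one]
  · have : 0 ≤ x * ∑ u ∈ K, RR G x (W \ K) ((W \ K) ∩ nbr G u) :=
      mul_nonneg hx.le (Finset.sum_nonneg fun u _ => (RR_pos G hx _ _).le)
    linarith
  · have : 0 ≤ x * ∑ u ∈ K, RR G x (W \ K) ((W \ K) ∩ nbr G u) :=
      mul_nonneg hx.le (Finset.sum_nonneg fun u _ => (RR_pos G hx _ _).le)
    linarith

/-- `K` is a simplicial clique in `G[W]`. -/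
def Simp {V : Type} [Fintype V] (G : SimpleGraph V) (Δ : ℕ) (W K : Finset V) : Prop :=
  K ⊆ W ∧ Clq G K ∧ (∀ u ∈ K, Clq G ((W \ K) ∩ nbr G u)) ∧ K.card ≤ Δ

theorem Clq.mono {V : Type} {G : SimpleGraph V} {K L : Finset V} (h : Clq G L) (hKL : K ⊆ L) :
    Clq G K := fun u hu w hw => h u (hKL hu) w (hKL hw)

theorem simp_of {V : Type} [Fintype V] {G : SimpleGraph V} (hG : ClawFree G) {Δ : ℕ}
    (hd : MaxDegLE G Δ) (U : Finset V) (a : V) (ha : a ∉ U) (hc : Clq G (U ∩ nbr G a)) :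
    Simp G Δ U (U ∩ nbr G a) := by
  refine ⟨Finset.inter_subset_left, hc, ?_, ?_⟩
  · intro y hy z hz z' hz' hne
    simp only [Finset.mem_inter, Finset.mem_sdiff, mem_nbr] at hy hz hz'
    have h1 : ¬ G.Adj a z := fun h => hz.1.2 ⟨hz.1.1, h⟩
    have h2 : ¬ G.Adj a z' := fun h => hz'.1.2 ⟨hz'.1.1, h⟩
    have h3 : a ≠ z := fun h => ha (h ▸ hz.1.1)
    have h4 : a ≠ z' := fun h => ha (h ▸ hz'.1.1)
    rcases hG y a z z' hy.2.symm hz.2 hz'.2 h3 h4 hne with h | h | h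
    · exact absurd h h1
    · exact absurd h h2
    · exact h
  · exact (Finset.card_le_card Finset.inter_subset_right).trans (hd a)

theorem Simp.next {V : Type} [Fintype V] {G : SimpleGraph V} (hG : ClawFree G) {Δ : ℕ}
    (hd : MaxDegLE G Δ) {W K : Finset V} (h : Simp G Δ W K) {u : V} (hu : u ∈ K) :
    Simp G Δ (W \ K) ((W \ K) ∩ nbr G u) :=
  simp_of hG hd _ u (by simp [hu]) (h.2.2.1 u hu)

/-- scalar inequality -/
theorem scalar_ineq {y κ A t : ℝ} (hA : 0 ≤ A) (ht : 0 ≤ t)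
    (hκ : ∀ s : ℝ, y * s * (1 - s) ≤ κ * (1 + y * s)) :
    1 + y / (1 + A) ≤ Real.exp (κ * t) * (1 + y / (1 + Real.exp t * A)) := by
  have hpos : ∀ t : ℝ, 0 < 1 + Real.exp t * A := fun t => by positivity
  have hder : ∀ t : ℝ, HasDerivAt (fun t => Real.exp (κ * t) * (1 + y / (1 + Real.exp t * A)))
      (Real.exp (κ * t) * κ * (1 + y / (1 + Real.exp t * A)) +
        Real.exp (κ * t) * (-(y * (Real.exp t * A)) / (1 + Real.exp t * A) ^ 2)) t := by
    intro t
    have h1 : HasDerivAt (fun t => Real.exp (κ * t)) (Real.exp (κ * t) * κ) t := by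
      have := ((hasDerivAt_id t).const_mul κ).exp
      simpa using this
    have h2 : HasDerivAt (fun t => 1 + Real.exp t * A) (Real.exp t * A) t :=
      ((Real.hasDerivAt_exp t).mul_const A).const_add 1
    have h3 : HasDerivAt (fun t => 1 + y / (1 + Real.exp t * A))
        (-(y * (Real.exp t * A)) / (1 + Real.exp t * A) ^ 2) t := by
      have := ((hasDerivAt_const t y).div h2 (hpos t).ne').const_add 1
      simpa using this
    exact h1.mul h3
  have hmono : Monotone (fun t => Real.exp (κ * t) * (1 + y / (1 + Real.exp t * A))) := by
    refine monotone_of_deriv_nonneg (fun t => (hder t).differentiableAt) ?_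
    intro t
    rw [(hder t).deriv]
    have hk := hκ (1 / (1 + Real.exp t * A))
    have hp := hpos t
    have e1 : Real.exp (κ * t) * κ * (1 + y / (1 + Real.exp t * A)) +
        Real.exp (κ * t) * (-(y * (Real.exp t * A)) / (1 + Real.exp t * A) ^ 2)
        = Real.exp (κ * t) * (κ * (1 + y * (1 / (1 + Real.exp t * A))) -
          y * (1 / (1 + Real.exp t * A)) * (1 - 1 / (1 + Real.exp t * A))) := by
      field_simp
      ring
    rw [e1]
    exact mul_nonneg (Real.exp_pos _).le (by linarith)
  have := hmono ht
  simpa using this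

theorem sum_ineq {V : Type} (K : Finset V) (Δ : ℕ) (hΔ : 0 < Δ) (hK : K.card ≤ Δ) {x κ t : ℝ}
    (hκ0 : 0 ≤ κ) (ht : 0 ≤ t)
    (hκ : ∀ s : ℝ, (x * Δ) * s * (1 - s) ≤ κ * (1 + (x * Δ) * s))
    (a : V → ℝ) (ha : ∀ u ∈ K, 0 ≤ a u) :
    1 + x * ∑ u ∈ K, 1 / (1 + a u)
      ≤ Real.exp (κ * t) * (1 + x * ∑ u ∈ K, 1 / (1 + Real.exp t * a u)) := by
  have hΔ' : (0 : ℝ) < Δ := by exact_mod_cast hΔ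
  have h1 : ∑ u ∈ K, (1 + (x * Δ) / (1 + a u)) ≤
      ∑ u ∈ K, Real.exp (κ * t) * (1 + (x * Δ) / (1 + Real.exp t * a u)) :=
    Finset.sum_le_sum fun u hu => scalar_ineq (ha u hu) ht hκ
  have e1 : ∑ u ∈ K, (1 + (x * Δ) / (1 + a u)) = K.card + Δ * (x * ∑ u ∈ K, 1 / (1 + a u)) := by
    rw [Finset.sum_add_distrib, Finset.mul_sum, Finset.mul_sum]
    simp only [Finset.sum_const, nsmul_eq_mul, mul_one]
    congr 1
    exact Finset.sum_congr rfl fun u _ => by ring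
  have e2 : ∑ u ∈ K, Real.exp (κ * t) * (1 + (x * Δ) / (1 + Real.exp t * a u))
      = Real.exp (κ * t) * (K.card + Δ * (x * ∑ u ∈ K, 1 / (1 + Real.exp t * a u))) := by
    rw [← Finset.mul_sum, Finset.sum_add_distrib, Finset.mul_sum, Finset.mul_sum]
    simp only [Finset.sum_const, nsmul_eq_mul, mul_one]
    congr 2
    exact Finset.sum_congr rfl fun u _ => by ring
  rw [e1, e2] at h1
  have h3 : (1 : ℝ) ≤ Real.exp (κ * t) := Real.one_le_exp (mul_nonneg hκ0 ht)
  have h4 : (K.card : ℝ) ≤ Δ := by exact_mod_cast hK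
  have h5 : (Δ : ℝ) * (1 + x * ∑ u ∈ K, 1 / (1 + a u)) ≤ Δ * (Real.exp (κ * t) *
      (1 + x * ∑ u ∈ K, 1 / (1 + Real.exp t * a u))) := by
    nlinarith
  exact le_of_mul_le_mul_left h5 hΔ'

/-- `W` and `W'` agree on the ball of radius `D` around `v`. -/
def Agree {V : Type} (G : SimpleGraph V) (v : V) (D : ℕ) (W W' : Finset V) : Prop :=
  ∀ u, G.edist v u ≤ D → (u ∈ W ↔ u ∈ W')

theorem Agree.sdiff {V : Type} {G : SimpleGraph V} {v : V} {D : ℕ} {W W' : Finset V}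
    (h : Agree G v D W W') (K : Finset V) : Agree G v D (W \ K) (W' \ K) := by
  intro u hu
  simp [h u hu]

theorem Agree.symm {V : Type} {G : SimpleGraph V} {v : V} {D : ℕ} {W W' : Finset V}
    (h : Agree G v D W W') : Agree G v D W' W := fun u hu => (h u hu).symm

theorem edist_step {V : Type} {G : SimpleGraph V} {v u w : V} {j : ℕ}
    (hu : G.edist v u ≤ j) (h : G.Adj u w) : G.edist v w ≤ ((j + 1 : ℕ) : ℕ∞) := by
  calc G.edist v w ≤ G.edist v u + G.edist u w := SimpleGraph.edist_triangle
    _ ≤ j + 1 := by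
        gcongr
        exact (SimpleGraph.edist_eq_one_iff_adj.2 h).le
    _ = _ := by push_cast; rfl

theorem Agree.inter {V : Type} [Fintype V] {G : SimpleGraph V} {v : V} {D : ℕ} {W W' : Finset V}
    (h : Agree G v D W W') {a : V} {j : ℕ} (ha : G.edist v a ≤ j) (hj : j + 1 ≤ D) :
    W ∩ nbr G a = W' ∩ nbr G a := by
  ext u
  simp only [Finset.mem_inter, mem_nbr]
  constructor
  · rintro ⟨h1, h2⟩
    exact ⟨(h u ((edist_step ha h2).trans (by exact_mod_cast hj))).1 h1, h2⟩
  · rintro ⟨h1, h2⟩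
    exact ⟨(h u ((edist_step ha h2).trans (by exact_mod_cast hj))).2 h1, h2⟩

theorem RR_ge {V : Type} [Fintype V] {G : SimpleGraph V} (hG : ClawFree G) {Δ : ℕ}
    (hd : MaxDegLE G Δ) {x : ℝ} (hx : 0 < x)
    {W K : Finset V} (h : Simp G Δ W K) : 1 / (1 + x * Δ) ≤ RR G x W K := by
  rw [RR_rec G hx W K h.1 h.2.1]
  have h0 : 0 ≤ ∑ u ∈ K, RR G x (W \ K) ((W \ K) ∩ nbr G u) :=
    Finset.sum_nonneg fun u _ => (RR_pos G hx _ _).le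
  have h1 : ∑ u ∈ K, RR G x (W \ K) ((W \ K) ∩ nbr G u) ≤ ∑ u ∈ K, (1 : ℝ) :=
    Finset.sum_le_sum fun u hu =>
      RR_le_one G hx _ _ (h.next hG hd hu).1 (h.next hG hd hu).2.1
  have h2 : (K.card : ℝ) ≤ Δ := by exact_mod_cast h.2.2.2
  simp only [Finset.sum_const, nsmul_eq_mul, mul_one] at h1
  apply one_div_le_one_div_of_le
  · positivity
  · gcongr
    linarith

theorem main_contract {V : Type} [Fintype V] {G : SimpleGraph V} (hG : ClawFree G) {Δ : ℕ}
    (hΔ : 0 < Δ) (hd : MaxDegLE G Δ) {x : ℝ} (hx : 0 < x) {κ : ℝ} (hκ0 : 0 ≤ κ)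
    (hκ : ∀ s : ℝ, (x * Δ) * s * (1 - s) ≤ κ * (1 + (x * Δ) * s)) (v : V) (D : ℕ) (m : ℕ) :
    ∀ (W W' K : Finset V) (j : ℕ), Simp G Δ W K → Simp G Δ W' K → Agree G v D W W' →
      (∀ u ∈ K, G.edist v u ≤ j) → j + 2 * m ≤ D →
      RR G x W K ≤ Real.exp (κ ^ m * Real.log (1 + x * Δ)) * RR G x W' K := by
  have hy : 0 ≤ x * Δ := by positivity
  have hL : 0 ≤ Real.log (1 + x * Δ) := Real.log_nonneg (by linarith)
  induction m with
  | zero =>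
    intro W W' K j hW hW' _ _ _
    rw [pow_zero, one_mul, Real.exp_log (by linarith)]
    have h1 := RR_le_one G hx _ _ hW.1 hW.2.1
    have h2 := RR_ge hG hd hx hW'
    have h3 : (1 + x * Δ) * (1 / (1 + x * Δ)) = 1 := by field_simp
    nlinarith
  | succ m ih =>
    intro W W' K j hW hW' hA hK hj
    set t := κ ^ m * Real.log (1 + x * Δ) with ht
    have ht0 : 0 ≤ t := by positivity
    have hpow : κ ^ (m + 1) * Real.log (1 + x * Δ) = κ * t := by rw [ht, pow_succ]; ring
    rw [hpow]
    have hA1 := hA.sdiff K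
    let a' : V → ℝ := fun u => x * ∑ w ∈ (W' \ K) ∩ nbr G u,
      RR G x ((W' \ K) \ ((W' \ K) ∩ nbr G u))
        (((W' \ K) \ ((W' \ K) ∩ nbr G u)) ∩ nbr G w)
    have ha' : ∀ u, 0 ≤ a' u := fun u =>
      mul_nonneg hx.le (Finset.sum_nonneg fun w _ => (RR_pos G hx _ _).le)
    have hR' : ∀ u ∈ K, RR G x (W' \ K) ((W' \ K) ∩ nbr G u) = 1 / (1 + a' u) := by
      intro u hu
      have hs := hW'.next hG hd hu
      exact RR_rec G hx _ _ hs.1 hs.2.1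
    have hR : ∀ u ∈ K, 1 / (1 + Real.exp t * a' u) ≤ RR G x (W \ K) ((W \ K) ∩ nbr G u) := by
      intro u hu
      have hs := hW.next hG hd hu
      have hs' := hW'.next hG hd hu
      have hKu : (W \ K) ∩ nbr G u = (W' \ K) ∩ nbr G u := hA1.inter (hK u hu) (by omega)
      rw [RR_rec G hx _ _ hs.1 hs.2.1]
      apply one_div_le_one_div_of_le
      · have : 0 ≤ x * ∑ w ∈ (W \ K) ∩ nbr G u,
          RR G x ((W \ K) \ ((W \ K) ∩ nbr G u))
            (((W \ K) \ ((W \ K) ∩ nbr G u)) ∩ nbr G w) :=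
          mul_nonneg hx.le (Finset.sum_nonneg fun w _ => (RR_pos G hx _ _).le)
        linarith
      · have : x * ∑ w ∈ (W \ K) ∩ nbr G u,
          RR G x ((W \ K) \ ((W \ K) ∩ nbr G u))
            (((W \ K) \ ((W \ K) ∩ nbr G u)) ∩ nbr G w) ≤ Real.exp t * a' u := by
          have e : Real.exp t * a' u = x * ∑ w ∈ (W' \ K) ∩ nbr G u, Real.exp t *
            RR G x ((W' \ K) \ ((W' \ K) ∩ nbr G u))
              (((W' \ K) \ ((W' \ K) ∩ nbr G u)) ∩ nbr G w) := by
            rw [← Finset.mul_sum]; simp only [a']; ring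
          rw [e, hKu]
          apply mul_le_mul_of_nonneg_left _ hx.le
          apply Finset.sum_le_sum
          intro w hw
          have hw2 : w ∈ (W \ K) ∩ nbr G u := hKu ▸ hw
          have hadj : G.Adj u w := mem_nbr.1 (Finset.mem_inter.1 hw).2
          have hdw := edist_step (hK u hu) hadj
          have hn := hs.next hG hd hw2
          have hn' := hs'.next hG hd hw
          have hA2 := hA1.sdiff ((W' \ K) ∩ nbr G u)
          have hKw := hA2.inter hdw (by omega)
          rw [hKu] at hn
          rw [hKw] at hn ⊢
          refine ih _ _ _ (j + 2) hn hn' hA2 ?_ (by omega)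
          intro z hz
          exact edist_step hdw (mem_nbr.1 (Finset.mem_inter.1 hz).2)
        linarith
    have hmain := sum_ineq K Δ hΔ hW.2.2.2 hκ0 ht0 hκ a' (fun u _ => ha' u)
    have hsum : ∑ u ∈ K, 1 / (1 + Real.exp t * a' u) ≤
        ∑ u ∈ K, RR G x (W \ K) ((W \ K) ∩ nbr G u) := Finset.sum_le_sum hR
    have hsum' : ∑ u ∈ K, RR G x (W' \ K) ((W' \ K) ∩ nbr G u) =
        ∑ u ∈ K, 1 / (1 + a' u) := Finset.sum_congr rfl hR'
    rw [RR_rec G hx W K hW.1 hW.2.1, RR_rec G hx W' K hW'.1 hW'.2.1, hsum', mul_one_div]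
    have hp1 : 0 ≤ x * ∑ u ∈ K, RR G x (W \ K) ((W \ K) ∩ nbr G u) :=
      mul_nonneg hx.le (Finset.sum_nonneg fun u _ => (RR_pos G hx _ _).le)
    have hp2 : 0 ≤ x * ∑ u ∈ K, 1 / (1 + a' u) :=
      mul_nonneg hx.le (Finset.sum_nonneg fun u _ => by have := ha' u; positivity)
    rw [div_le_div_iff₀ (by linarith) (by linarith), one_mul]
    refine hmain.trans ?_
    gcongr

/-- two-neighbour ratio -/
theorem two_step {V : Type} [Fintype V] {G : SimpleGraph V} (hG : ClawFree G) {Δ : ℕ}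
    (hΔ : 0 < Δ) (hd : MaxDegLE G Δ) {x : ℝ} (hx : 0 < x) {κ : ℝ} (hκ0 : 0 ≤ κ)
    (hκ : ∀ s : ℝ, (x * Δ) * s * (1 - s) ≤ κ * (1 + (x * Δ) * s)) (v : V) (D : ℕ) (m : ℕ)
    (U U' : Finset V) (hA : Agree G v D U U')
    (hU : ∀ u ∈ U, u ≠ v ∧ ¬ G.Adj v u) (hU' : ∀ u ∈ U', u ≠ v ∧ ¬ G.Adj v u)
    (hm : 2 + 2 * m ≤ D) (a b : V) (ha : G.Adj v a) (hb : G.Adj v b) :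
    RR G x U (nbs G {a, b}) ≤
      Real.exp (2 * (κ ^ m * Real.log (1 + x * Δ))) * RR G x U' (nbs G {a, b}) := by
  have hclq : ∀ U : Finset V, (∀ u ∈ U, u ≠ v ∧ ¬ G.Adj v u) → ∀ a, G.Adj v a →
      Clq G (U ∩ nbr G a) := by
    intro U hU a ha z hz z' hz' hne
    simp only [Finset.mem_inter, mem_nbr] at hz hz'
    rcases hG a v z z' ha.symm hz.2 hz'.2 (hU z hz.1).1.symm (hU z' hz'.1).1.symm hne with
      h | h | h
    · exact absurd h (hU z hz.1).2
    · exact absurd h (hU z' hz'.1).2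
    · exact h
  have hdist : ∀ a, G.Adj v a → G.edist v a ≤ (1 : ℕ) := fun a ha => by
    exact_mod_cast (SimpleGraph.edist_eq_one_iff_adj.2 ha).le
  have hfac : ∀ U : Finset V, RR G x U (nbs G {a, b}) = RR G x U (U ∩ nbr G a) *
      RR G x (U \ (U ∩ nbr G a)) ((U \ (U ∩ nbr G a)) ∩ nbr G b) := by
    intro U
    have e : U \ nbs G {a, b} =
        (U \ (U ∩ nbr G a)) \ ((U \ (U ∩ nbr G a)) ∩ nbr G b) := by
      ext u
      simp only [Finset.mem_sdiff, Finset.mem_inter, mem_nbr, mem_nbs, Finset.mem_insert,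
        Finset.mem_singleton, exists_eq_or_imp, exists_eq_left]
      tauto
    unfold RR
    rw [e]
    have h1 := Z_pos G hx U
    have h2 := Z_pos G hx (U \ (U ∩ nbr G a))
    field_simp
  have hs : ∀ U : Finset V, (∀ u ∈ U, u ≠ v ∧ ¬ G.Adj v u) → ∀ a, G.Adj v a →
      Simp G Δ U (U ∩ nbr G a) := fun U hU a ha =>
    simp_of hG hd U a (fun h => (hU a h).2 ha) (hclq U hU a ha)
  rw [hfac U, hfac U']
  have hKa := hA.inter (hdist a ha) (by omega)
  have hA2 := hA.sdiff (U' ∩ nbr G a)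
  have hKb := hA2.inter (hdist b hb) (by omega)
  rw [hKa, hKb]
  have h1 : RR G x U (U' ∩ nbr G a) ≤
      Real.exp (κ ^ m * Real.log (1 + x * Δ)) * RR G x U' (U' ∩ nbr G a) := by
    refine main_contract hG hΔ hd hx hκ0 hκ v D m U U' _ 2 ?_ (hs U' hU' a ha) hA ?_ hm
    · rw [← hKa]; exact hs U hU a ha
    · intro z hz
      exact edist_step (hdist a ha) (mem_nbr.1 (Finset.mem_inter.1 hz).2)
  have hV : ∀ u ∈ U \ (U' ∩ nbr G a), u ≠ v ∧ ¬ G.Adj v u := fun u hu =>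
    hU u (Finset.mem_sdiff.1 hu).1
  have hV' : ∀ u ∈ U' \ (U' ∩ nbr G a), u ≠ v ∧ ¬ G.Adj v u := fun u hu =>
    hU' u (Finset.mem_sdiff.1 hu).1
  have h2 : RR G x (U \ (U' ∩ nbr G a)) ((U' \ (U' ∩ nbr G a)) ∩ nbr G b) ≤
      Real.exp (κ ^ m * Real.log (1 + x * Δ)) *
        RR G x (U' \ (U' ∩ nbr G a)) ((U' \ (U' ∩ nbr G a)) ∩ nbr G b) := by
    refine main_contract hG hΔ hd hx hκ0 hκ v D m _ _ _ 2 ?_ (hs _ hV' b hb) hA2 ?_ hm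
    · rw [← hKb]; exact hs _ hV b hb
    · intro z hz
      exact edist_step (hdist b hb) (mem_nbr.1 (Finset.mem_inter.1 hz).2)
  calc _ ≤ (Real.exp (κ ^ m * Real.log (1 + x * Δ)) * RR G x U' (U' ∩ nbr G a)) *
      (Real.exp (κ ^ m * Real.log (1 + x * Δ)) *
        RR G x (U' \ (U' ∩ nbr G a)) ((U' \ (U' ∩ nbr G a)) ∩ nbr G b)) :=
        mul_le_mul h1 h2 (RR_pos G hx _ _).le
          (mul_nonneg (Real.exp_pos _).le (RR_pos G hx _ _).le)
    _ = _ := by rw [two_mul, Real.exp_add]; ring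

theorem ratio_contract {V : Type} [Fintype V] {G : SimpleGraph V} (hG : ClawFree G) {Δ : ℕ}
    (hΔ : 0 < Δ) (hd : MaxDegLE G Δ) {x : ℝ} (hx : 0 < x) {κ : ℝ} (hκ0 : 0 ≤ κ)
    (hκ : ∀ s : ℝ, (x * Δ) * s * (1 - s) ≤ κ * (1 + (x * Δ) * s)) (v : V) (D : ℕ) (m : ℕ)
    (W W' : Finset V) (hA : Agree G v D W W') (hv : v ∈ W)
    (hm : 2 + 2 * m ≤ D) :
    ratio G W' v x ≤
      Real.exp (2 * (κ ^ m * Real.log (1 + x * Δ))) * ratio G W v x := by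
  have hL : 0 ≤ Real.log (1 + x * Δ) := Real.log_nonneg (by
    have : 0 ≤ x * Δ := by positivity
    linarith)
  have hdv : G.edist v v ≤ (0 : ℕ) := by simp
  have hv' : v ∈ W' := (hA v (hdv.trans (by exact_mod_cast Nat.zero_le D))).1 hv
  set E := Real.exp (2 * (κ ^ m * Real.log (1 + x * Δ))) with hE
  have hE1 : 1 ≤ E := Real.one_le_exp (by positivity)
  set U := W \ closedNbhd G v with hUdef
  set U' := W' \ closedNbhd G v with hUdef'
  have hNN : W ∩ closedNbhd G v = W' ∩ closedNbhd G v := by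
    have := hA.inter hdv (by omega)
    ext u
    have h2 := Finset.ext_iff.1 this u
    simp only [Finset.mem_inter, mem_nbr, mem_closedNbhd] at h2 ⊢
    by_cases huv : u = v
    · subst huv; simp [hv, hv']
    · simp only [huv, false_or]; exact h2
  have hexp := Z_expand G x W (W ∩ closedNbhd G v) Finset.inter_subset_left
  have hexp' := Z_expand G x W' (W' ∩ closedNbhd G v) Finset.inter_subset_left
  rw [Finset.sdiff_inter_self_left] at hexp hexp'
  rw [← hNN] at hexp'
  have hAU : Agree G v D U U' := hA.sdiff _
  have hU : ∀ u ∈ U, u ≠ v ∧ ¬ G.Adj v u := by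
    intro u hu
    simpa [hUdef, mem_closedNbhd] using (Finset.mem_sdiff.1 hu).2
  have hU' : ∀ u ∈ U', u ≠ v ∧ ¬ G.Adj v u := by
    intro u hu
    simpa [hUdef', mem_closedNbhd] using (Finset.mem_sdiff.1 hu).2
  have hterm : ∀ S ∈ (W ∩ closedNbhd G v).powerset,
      wt G x S * RR G x U (nbs G S) ≤ E * (wt G x S * RR G x U' (nbs G S)) := by
    intro S hS
    by_cases hi : IsInd G S
    swap
    · simp [wt, hi]
    have hSv : ∀ u ∈ S, u = v ∨ G.Adj v u := fun u hu =>
      mem_closedNbhd.1 (Finset.mem_inter.1 (Finset.mem_powerset.1 hS hu)).2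
    suffices h : RR G x U (nbs G S) ≤ E * RR G x U' (nbs G S) by
      have := mul_le_mul_of_nonneg_left h (wt_nonneg G hx S)
      linarith
    have triv : (∀ U : Finset V, (∀ u ∈ U, u ≠ v ∧ ¬ G.Adj v u) → U \ nbs G S = U) →
        RR G x U (nbs G S) ≤ E * RR G x U' (nbs G S) := by
      intro h
      unfold RR
      rw [h U hU, h U' hU', div_self (Z_pos G hx _).ne', div_self (Z_pos G hx _).ne']
      linarith
    by_cases hvS : v ∈ S
    · apply triv
      intro U hU
      apply Finset.sdiff_eq_self_of_disjoint
      rw [Finset.disjoint_left]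
      intro u hu hu2
      obtain ⟨w, hw, hwu⟩ := mem_nbs.1 hu2
      rcases hSv w hw with rfl | h
      · exact (hU u hu).2 hwu
      · exact hi v hvS w hw h
    have hSv' : ∀ u ∈ S, G.Adj v u := fun u hu => by
      rcases hSv u hu with rfl | h
      · exact absurd hu hvS
      · exact h
    by_cases hS0 : S = ∅
    · apply triv
      intro U hU
      rw [hS0, nbs_empty, Finset.sdiff_empty]
    have hab : ∃ a ∈ S, ∃ b ∈ S, S = {a, b} := by
      have hc : S.card ≤ 2 := by
        by_contra hc
        obtain ⟨a, ha, b, hb, c, hc, hab, hac, hbc⟩ := Finset.two_lt_card.1 (not_le.1 hc)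
        rcases hG v a b c (hSv' a ha) (hSv' b hb) (hSv' c hc) hab hac hbc with h | h | h
        · exact hi a ha b hb h
        · exact hi a ha c hc h
        · exact hi b hb c hc h
      have hc0 : 0 < S.card := Finset.card_pos.2 (Finset.nonempty_iff_ne_empty.2 hS0)
      have : S.card = 1 ∨ S.card = 2 := by omega
      rcases this with h | h
      · obtain ⟨a, rfl⟩ := Finset.card_eq_one.1 h
        exact ⟨a, by simp, a, by simp, by simp⟩
      · obtain ⟨a, b, _, rfl⟩ := Finset.card_eq_two.1 h
        exact ⟨a, by simp, b, by simp, rfl⟩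
    obtain ⟨a, ha, b, hb, hSab⟩ := hab
    have := two_step hG hΔ hd hx hκ0 hκ v D m U U' hAU hU hU' hm a b (hSv' a ha) (hSv' b hb)
    rwa [← hSab] at this
  have hsum := Finset.sum_le_sum hterm
  rw [← Finset.mul_sum] at hsum
  have hdivU : ∑ S ∈ (W ∩ closedNbhd G v).powerset, wt G x S * RR G x U (nbs G S)
      = Z ℝ G W x / Z ℝ G U x := by
    rw [hexp, Finset.sum_div]
    exact Finset.sum_congr rfl fun S _ => by unfold RR; ring
  have hdivU' : ∑ S ∈ (W ∩ closedNbhd G v).powerset, wt G x S * RR G x U' (nbs G S)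
      = Z ℝ G W' x / Z ℝ G U' x := by
    rw [hexp', Finset.sum_div]
    exact Finset.sum_congr rfl fun S _ => by unfold RR; ring
  rw [hdivU, hdivU'] at hsum
  have p1 := Z_pos G hx W
  have p2 := Z_pos G hx W'
  have p3 := Z_pos G hx U
  have p4 := Z_pos G hx U'
  unfold ratio
  rw [← hUdef, ← hUdef']
  rw [← mul_div_assoc, div_le_div_iff₀ p3 p4] at hsum
  rw [← mul_div_assoc, div_le_div_iff₀ p2 p1]
  nlinarith [mul_le_mul_of_nonneg_left hsum hx.le]

theorem condProb_eq {V : Type} [Fintype V] (G : SimpleGraph V) {x : ℝ} (hx : 0 < x)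
    (Λ : Finset V) (σ : V → Bool) (v : V) (hv : v ∉ Λ) (hσ : IsBC G Λ σ) :
    condProb G x Λ σ v = if v ∈ goodSet G Λ σ then ratio G (goodSet G Λ σ) v x else 0 := by
  set S := Λ.filter (fun u => σ u = true) with hSdef
  have hS : IsInd G S := by
    intro u hu w hw
    simp only [hSdef, Finset.mem_filter] at hu hw
    exact hσ u hu.1 w hw.1 hu.2 hw.2
  have hSv : v ∉ S := fun h => hv (Finset.mem_filter.1 h).1
  have hcompat : ∀ s : Finset V, Compat Λ σ s ↔ s ∩ Λ = S := by
    intro s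
    rw [Finset.ext_iff]
    simp only [Compat, hSdef, Finset.mem_inter, Finset.mem_filter]
    refine forall_congr' fun u => ?_
    tauto
  have hden : (∑ s : Finset V, if IsInd G s ∧ Compat Λ σ s then x ^ s.card else 0)
      = x ^ S.card * Z ℝ G (goodSet G Λ σ) x := by
    have h := fiber G x univ Λ S (Finset.subset_univ _) (Finset.filter_subset _ _)
    have e : (univ \ Λ) \ nbs G S = goodSet G Λ σ := by
      ext u
      simp only [goodSet, hSdef, Finset.mem_sdiff, Finset.mem_filter, mem_nbs, not_exists]
      simp only [not_and, and_imp]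
    rw [e] at h
    have h1 : wt G x S = x ^ S.card := by simp [wt, hS]
    rw [← h1, ← h, Finset.powerset_univ, Finset.sum_filter]
    refine Finset.sum_congr rfl fun s _ => ?_
    rw [hcompat]
    unfold wt
    split_ifs <;> simp_all
  have hnum : (∑ s : Finset V, if IsInd G s ∧ Compat Λ σ s ∧ v ∈ s then x ^ s.card else 0)
      = wt G x (insert v S) * Z ℝ G (goodSet G Λ σ \ closedNbhd G v) x := by
    have h := fiber G x univ (insert v Λ) (insert v S) (Finset.subset_univ _)
      (Finset.insert_subset_insert _ (Finset.filter_subset _ _))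
    have e : (univ \ (insert v Λ)) \ nbs G (insert v S) = goodSet G Λ σ \ closedNbhd G v := by
      ext u
      simp only [goodSet, hSdef, Finset.mem_sdiff, Finset.mem_filter, mem_nbs,
        Finset.mem_insert, mem_closedNbhd, exists_eq_or_imp, not_or, not_exists]
      simp only [not_and, and_imp]
      tauto
    rw [e] at h
    rw [← h, Finset.powerset_univ, Finset.sum_filter]
    refine Finset.sum_congr rfl fun s _ => ?_
    have hiff : s ∩ insert v Λ = insert v S ↔ (Compat Λ σ s ∧ v ∈ s) := by
      rw [hcompat]
      constructor
      · intro h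
        have hvs : v ∈ s := by
          have : v ∈ s ∩ insert v Λ := by rw [h]; simp
          exact (Finset.mem_inter.1 this).1
        refine ⟨?_, hvs⟩
        ext u
        have hu := Finset.ext_iff.1 h u
        simp only [Finset.mem_inter, Finset.mem_insert] at hu ⊢
        by_cases huv : u = v
        · subst huv; simp [hv, hSv]
        · simpa [huv] using hu
      · rintro ⟨h, hvs⟩
        rw [Finset.inter_insert_of_mem hvs, h]
    by_cases hc : Compat Λ σ s ∧ v ∈ s
    · rw [if_pos (hiff.2 hc)]
      simp [wt, hc]
    · rw [if_neg (fun h => hc (hiff.1 h)), if_neg (fun h => hc h.2)]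
  unfold condProb
  rw [hnum, hden]
  have hind : IsInd G (insert v S) ↔ v ∈ goodSet G Λ σ := by
    simp only [goodSet, Finset.mem_filter, Finset.mem_sdiff, Finset.mem_univ, true_and]
    constructor
    · intro h
      refine ⟨hv, fun w hw hw2 => h w ?_ v (Finset.mem_insert_self _ _)⟩
      exact Finset.mem_insert_of_mem (Finset.mem_filter.2 ⟨hw, hw2⟩)
    · rintro ⟨_, h⟩ u hu w hw
      have hm : ∀ u ∈ S, ¬ G.Adj u v := fun u hu =>
        h u (Finset.mem_filter.1 hu).1 (Finset.mem_filter.1 hu).2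
      rcases Finset.mem_insert.1 hu with e1 | hu1 <;> rcases Finset.mem_insert.1 hw with e2 | hw1
      · rw [e1, e2]; exact G.loopless.irrefl _
      · rw [e1]; exact fun h => hm w hw1 h.symm
      · rw [e2]; exact hm u hu1
      · exact hS u hu1 w hw1
  have hp := Z_pos G hx (goodSet G Λ σ)
  split_ifs with hg
  · have : wt G x (insert v S) = x ^ S.card * x := by
      rw [wt, if_pos (hind.2 hg), Finset.card_insert_of_notMem hSv, pow_succ]
    rw [this, ratio]
    field_simp
  · have : wt G x (insert v S) = 0 := by
      rw [wt, if_neg (fun h => hg (hind.1 h))]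
    rw [this]; simp

theorem condProb_mem {V : Type} [Fintype V] (G : SimpleGraph V) {x : ℝ} (hx : 0 < x)
    (Λ : Finset V) (σ : V → Bool) (v : V) :
    0 ≤ condProb G x Λ σ v ∧ condProb G x Λ σ v ≤ 1 := by
  unfold condProb
  have h1 : 0 ≤ ∑ s : Finset V, if IsInd G s ∧ Compat Λ σ s ∧ v ∈ s then x ^ s.card else 0 :=
    Finset.sum_nonneg fun s _ => by split_ifs <;> positivity
  have h2 : (∑ s : Finset V, if IsInd G s ∧ Compat Λ σ s ∧ v ∈ s then x ^ s.card else 0) ≤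
      ∑ s : Finset V, if IsInd G s ∧ Compat Λ σ s then x ^ s.card else 0 := by
    refine Finset.sum_le_sum fun s _ => ?_
    by_cases h : IsInd G s ∧ Compat Λ σ s ∧ v ∈ s
    · rw [if_pos h, if_pos ⟨h.1, h.2.1⟩]
    · rw [if_neg h]; split_ifs <;> positivity
  exact ⟨div_nonneg h1 (h1.trans h2), div_le_one_of_le₀ h2 (h1.trans h2)⟩

theorem agree_good {V : Type} [Fintype V] (G : SimpleGraph V) (Λ : Finset V) (σ τ : V → Bool)
    (v : V) (d D : ℕ) (hD : D + 2 ≤ d)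
    (h : ∀ u ∈ Λ, σ u ≠ τ u → (d : ℕ∞) ≤ G.edist v u) :
    Agree G v D (goodSet G Λ σ) (goodSet G Λ τ) := by
  intro u hu
  have key : ∀ w ∈ Λ, G.Adj w u → σ w = τ w := by
    intro w hw hadj
    by_contra hne
    have h1 := (h w hw hne).trans (edist_step hu hadj.symm)
    have : d ≤ D + 1 := by exact_mod_cast h1
    omega
  simp only [goodSet, Finset.mem_filter]
  constructor
  · rintro ⟨h1, h2⟩
    exact ⟨h1, fun w hw hw2 hadj => h2 w hw (by rw [key w hw hadj]; exact hw2) hadj⟩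
  · rintro ⟨h1, h2⟩
    exact ⟨h1, fun w hw hw2 hadj => h2 w hw (by rw [← key w hw hadj]; exact hw2) hadj⟩

theorem diff_le {p q ε : ℝ} (hε : 0 ≤ ε) (hp0 : 0 < p) (hp1 : p ≤ 1)
    (h : p ≤ Real.exp ε * q) : p - q ≤ ε := by
  have h1 : 1 - ε ≤ Real.exp (-ε) := by
    have := Real.add_one_le_exp (-ε); linarith
  have h2 : Real.exp (-ε) * p ≤ q := by
    have := mul_le_mul_of_nonneg_left h (Real.exp_pos (-ε)).le
    rw [← mul_assoc, ← Real.exp_add] at this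
    simpa using this
  have h4 : Real.exp (-ε) * p ≤ q := h2
  nlinarith

end Aux

/-- Let `Δ ≥ 2` and let `𝒢` be the family of all claw-free graphs of
maximum degree at most `Δ`.  For every `λ > 0` and every `δ` with `0 < δ < 1/(eΔ)` there is
a constant `C > 0` such that the hard-core measure at `λ` satisfies strong spatial mixing
on `𝒢` with exponential rate `r = 1 + √(δ/λ)` and constant `C`. -/
theorem SSM_clawfree
    (Δ : ℕ) (hΔ : 2 ≤ Δ)
    (lam : ℝ) (hlam : 0 < lam)
    (δ : ℝ) (hδ0 : 0 < δ) (hδ1 : δ < 1 / (Real.exp 1 * Δ)) :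
    ∃ C > 0, ∀ (V : Type) (_ : Fintype V) (G : SimpleGraph V),
      ClawFree G → MaxDegLE G Δ → SSM G lam C (1 + Real.sqrt (δ / lam)) := by
  set r := 1 + Real.sqrt (δ / lam) with hr
  have hΔ0 : 0 < Δ := by omega
  have hΔR : (0 : ℝ) < Δ := by exact_mod_cast hΔ0
  have hs0 : 0 < Real.sqrt (δ / lam) := Real.sqrt_pos.2 (div_pos hδ0 hlam)
  have hr1 : 1 < r := by rw [hr]; linarith
  have hr0 : 0 < r := by linarith
  have hsq : Real.sqrt (δ / lam) ^ 2 = δ / lam := Real.sq_sqrt (div_pos hδ0 hlam).le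
  have hδΔ : δ * Δ ≤ 1 := by
    have he : (1 : ℝ) ≤ Real.exp 1 := Real.one_le_exp zero_le_one
    have h1 : δ * (Real.exp 1 * Δ) < 1 := (lt_div_iff₀ (by positivity)).1 hδ1
    have h2 : δ * Δ * 1 ≤ δ * Δ * Real.exp 1 := mul_le_mul_of_nonneg_left he (by positivity)
    nlinarith
  set y := lam * (Δ : ℝ) with hy
  have hy0 : 0 < y := by positivity
  have hys : y * (r - 1) ^ 2 ≤ 1 := by
    have : r - 1 = Real.sqrt (δ / lam) := by rw [hr]; ring
    rw [this, hsq, hy]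
    have : lam * (Δ : ℝ) * (δ / lam) = δ * Δ := by field_simp
    rw [this]; exact hδΔ
  set κ := (r⁻¹) ^ 2 with hκdef
  have hκ0 : 0 ≤ κ := by positivity
  have hdisc : y * (1 - κ) ^ 2 ≤ 4 * κ := by
    have e1 : y * (1 - κ) ^ 2 = (y * (r - 1) ^ 2) * ((r + 1) ^ 2 / r ^ 4) := by
      rw [hκdef]; field_simp; ring
    have e2 : (r + 1) ^ 2 / r ^ 4 ≤ 4 * κ := by
      rw [hκdef, inv_pow, ← div_eq_mul_inv, div_le_div_iff₀ (by positivity) (by positivity)]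
      have : (r + 1) ^ 2 ≤ 4 * r ^ 2 := by nlinarith
      have hr2 : 0 ≤ r ^ 2 := by positivity
      nlinarith [mul_le_mul_of_nonneg_right this hr2]
    rw [e1]
    have h0 : 0 ≤ (r + 1) ^ 2 / r ^ 4 := by positivity
    nlinarith
  have hκ : ∀ s : ℝ, y * s * (1 - s) ≤ κ * (1 + y * s) := by
    intro s
    have h1 : 0 ≤ 4 * y * (κ * (1 + y * s) - y * s * (1 - s)) := by
      have h2 := mul_le_mul_of_nonneg_left hdisc hy0.le
      nlinarith [sq_nonneg (2 * y * s - y * (1 - κ))]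
    have h3 := nonneg_of_mul_nonneg_right h1 (by positivity : 0 < 4 * y)
    linarith
  have hL : 0 ≤ Real.log (1 + y) := Real.log_nonneg (by linarith)
  refine ⟨(2 * Real.log (1 + y) + 1) * r ^ 5, by positivity, ?_⟩
  intro V _ G hG hdeg v Λ hv σ τ hσ hτ d hd
  have hrd : r ^ (-(d : ℤ)) = (r⁻¹) ^ d := by rw [zpow_neg, zpow_natCast, inv_pow]
  rw [hrd]
  have hm1 := condProb_mem G hlam Λ σ v
  have hm2 := condProb_mem G hlam Λ τ v
  have hrinv : 0 < r⁻¹ := by positivity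
  have hpow5 : ∀ k : ℕ, d ≤ k + 5 → (r⁻¹) ^ k ≤ r ^ 5 * (r⁻¹) ^ d := by
    intro k hk
    have e : (r⁻¹) ^ k = r ^ 5 * (r⁻¹) ^ (k + 5) := by
      rw [pow_add, inv_pow r 5]; field_simp
    rw [e]
    apply mul_le_mul_of_nonneg_left _ (by positivity)
    exact pow_le_pow_of_le_one hrinv.le (inv_le_one_of_one_le₀ hr1.le) hk
  by_cases hd4 : d < 4
  · have h1 : |condProb G lam Λ σ v - condProb G lam Λ τ v| ≤ 1 := by
      rw [abs_le]; constructor <;> linarith [hm1.1, hm1.2, hm2.1, hm2.2]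
    have h2 := hpow5 0 (by omega)
    rw [pow_zero] at h2
    nlinarith
  · obtain ⟨m, hm⟩ : ∃ m, 2 * m + 4 ≤ d ∧ d ≤ 2 * m + 5 := ⟨(d - 4) / 2, by omega⟩
    have hAg := agree_good G Λ σ τ v d (2 + 2 * m) (by omega) hd
    have hbound : |condProb G lam Λ σ v - condProb G lam Λ τ v| ≤
        2 * (κ ^ m * Real.log (1 + y)) := by
      have hv0 : G.edist v v ≤ ((2 + 2 * m : ℕ) : ℕ∞) := by simp
      have hiff := hAg v hv0
      rw [condProb_eq G hlam Λ σ v hv hσ] at hm1 ⊢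
      rw [condProb_eq G hlam Λ τ v hv hτ] at hm2 ⊢
      by_cases hg : v ∈ goodSet G Λ σ
      · have hg' := hiff.1 hg
        rw [if_pos hg] at hm1 ⊢
        rw [if_pos hg'] at hm2 ⊢
        have c1 := ratio_contract hG hΔ0 hdeg hlam hκ0 hκ v _ m _ _ hAg hg le_rfl
        have c2 := ratio_contract hG hΔ0 hdeg hlam hκ0 hκ v _ m _ _ hAg.symm hg' le_rfl
        have hpos : ∀ W : Finset V, 0 < ratio G W v lam := fun W =>
          div_pos (mul_pos hlam (Z_pos G hlam _)) (Z_pos G hlam _)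
        have d1 := diff_le (by positivity) (hpos _) hm2.2 c1
        have d2 := diff_le (by positivity) (hpos _) hm1.2 c2
        rw [abs_le]; constructor <;> linarith
      · have hg' : v ∉ goodSet G Λ τ := fun h => hg (hiff.2 h)
        rw [if_neg hg, if_neg hg']
        simp only [sub_self, abs_zero]
        positivity
    have hκm : κ ^ m = (r⁻¹) ^ (2 * m) := by rw [hκdef, ← pow_mul]
    have h3 := hpow5 (2 * m) hm.2
    rw [← hκm] at h3
    have h4 : 0 ≤ r ^ 5 * (r⁻¹) ^ d := by positivity
    nlinarith [mul_le_mul_of_nonneg_left h3 hL]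

end HardCore

end
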